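/- Let f ∈ ℂ[x_0,x_1,x_2] be homogeneous of degree d and 1 ≤ m ≤ d−2, and let P_f be the Koszul flattening of f. If f = Σ_{i=1}^r c_i ℓ_{v_i}^d for some nonzero v_i ∈ ℂ³ and c_i ∈ ℂ, then rank P_f ≤ 2r. -/

import Mathlib

open MvPolynomial

/-- The linear form `ℓ_v = Σ_j v_j x_j` associated to a vector `v ∈ ℂ^k`. -/
noncomputable def linForm (k : ℕ) (v : Fin k → ℂ) : MvPolynomial (Fin k) ℂ :=
  ∑ j, MvPolynomial.C (v j) * MvPolynomial.X j

/-- `diffOp p f = p(∂/∂x_0, …, ∂/∂x_{k-1})(f)`: the constant-coefficient differential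
operator associated to `p`, applied to `f`.  For `p` homogeneous of degree `m` this is
the catalecticant `C_f^m` applied to `p`. -/
noncomputable def diffOp {k : ℕ} (p f : MvPolynomial (Fin k) ℂ) : MvPolynomial (Fin k) ℂ :=
  ∑ μ ∈ p.support, p.coeff μ •
    (((μ.support.sort (· ≤ ·)).map fun i =>
        ((MvPolynomial.pderiv i).toLinearMap :
          Module.End ℂ (MvPolynomial (Fin k) ℂ)) ^ (μ i)).prod f)

/-- The Koszul flattening `P_f` (for `f ∈ ℂ[x_0,x_1,x_2]`): it sends a triple
`(p_0,p_1,p_2)` of (degree-`m`) polynomials to the triple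
`(C_{f_2}p_1 − C_{f_1}p_2, C_{f_0}p_2 − C_{f_2}p_0, C_{f_1}p_0 − C_{f_0}p_1)`,
where `f_i = ∂f/∂x_i` and `C_{f_i}p = p(∂)(f_i)`. -/
noncomputable def koszulMap (f : MvPolynomial (Fin 3) ℂ)
    (p : Fin 3 → MvPolynomial (Fin 3) ℂ) : Fin 3 → MvPolynomial (Fin 3) ℂ :=
  ![diffOp (p 1) (MvPolynomial.pderiv 2 f) - diffOp (p 2) (MvPolynomial.pderiv 1 f),
    diffOp (p 2) (MvPolynomial.pderiv 0 f) - diffOp (p 0) (MvPolynomial.pderiv 2 f),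
    diffOp (p 0) (MvPolynomial.pderiv 1 f) - diffOp (p 1) (MvPolynomial.pderiv 0 f)]

lemma pderiv_linForm {k : ℕ} (v : Fin k → ℂ) (a : Fin k) :
    pderiv a (linForm k v) = C (v a) := by
  simp [linForm, Derivation.leibniz, pderiv_X, Pi.single_apply]

lemma pderiv_linForm_pow {k : ℕ} (v : Fin k → ℂ) (a : Fin k) (n : ℕ) :
    pderiv a (linForm k v ^ n) = ((n : ℂ) * v a) • linForm k v ^ (n - 1) := by
  rw [Derivation.leibniz_pow, pderiv_linForm, smul_eq_C_mul, C_mul, nsmul_eq_mul, smul_eq_mul,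
    map_natCast]
  ring

lemma iterate_pderiv_linForm_pow {k : ℕ} (v : Fin k → ℂ) (a : Fin k) (n e : ℕ) :
    (((pderiv a).toLinearMap : Module.End ℂ (MvPolynomial (Fin k) ℂ)) ^ e) (linForm k v ^ n) =
      ((n.descFactorial e : ℂ) * v a ^ e) • linForm k v ^ (n - e) := by
  induction e with
  | zero => simp
  | succ e ih =>
    rw [pow_succ', Module.End.mul_apply, ih, map_smul, Derivation.coeFn_coe, pderiv_linForm_pow,
      smul_smul, Nat.descFactorial_succ, Nat.sub_sub]
    congr 1
    push_cast
    ring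

lemma listProd_pderiv_linForm_pow {k : ℕ} (v : Fin k → ℂ) (n : ℕ) (e : Fin k → ℕ)
    (l : List (Fin k)) :
    (l.map fun i => ((pderiv i).toLinearMap : Module.End ℂ (MvPolynomial (Fin k) ℂ)) ^ e i).prod
        (linForm k v ^ n) =
      ((n.descFactorial (l.map e).sum : ℂ) * (l.map fun i => v i ^ e i).prod) •
        linForm k v ^ (n - (l.map e).sum) := by
  induction l with
  | nil => simp
  | cons a l ih =>
    simp only [List.map_cons, List.prod_cons, List.sum_cons, Module.End.mul_apply, ih, map_smul,
      iterate_pderiv_linForm_pow, smul_smul]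
    have h := Nat.descFactorial_mul_descFactorial (n := n) (Nat.le_add_left (l.map e).sum (e a))
    rw [Nat.add_sub_cancel] at h
    rw [← h, Nat.sub_sub, Nat.add_comm (e a)]
    congr 1
    push_cast
    ring

/-- A homogeneous differential operator of degree `m` maps a power of `ℓ_v` to a multiple of a
power of `ℓ_v`, the coefficient being governed by the value of the operator's symbol at `v`. -/
lemma diffOp_linForm_pow {k m : ℕ} {p : MvPolynomial (Fin k) ℂ} (hp : p.IsHomogeneous m)
    (v : Fin k → ℂ) (n : ℕ) :
    diffOp p (linForm k v ^ n) =
      ((n.descFactorial m : ℂ) * eval v p) • linForm k v ^ (n - m) := by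
  rw [diffOp, eval_eq', Finset.mul_sum, Finset.sum_smul]
  refine Finset.sum_congr rfl fun μ hμ => ?_
  have hsum : ((μ.support.sort (· ≤ ·)).map μ).sum = m := by
    rw [((Finset.sort_perm_toList _ _).map _).sum_eq, Finset.sum_map_toList]
    exact (Finsupp.degree_eq_weight_one (R := ℕ) ▸ hp (mem_support_iff.mp hμ) :)
  have hprod : ((μ.support.sort (· ≤ ·)).map fun i => v i ^ μ i).prod = ∏ i, v i ^ μ i := by
    rw [((Finset.sort_perm_toList _ _).map _).prod_eq, Finset.prod_map_toList]
    exact Finsupp.prod_fintype μ (fun i e => v i ^ e) fun _ => pow_zero _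
  rw [listProd_pderiv_linForm_pow, hsum, hprod, smul_smul]
  congr 1
  ring

lemma diffOp_sum_smul {k : ℕ} {ι : Type*} (s : Finset ι) (p : MvPolynomial (Fin k) ℂ) (c : ι → ℂ)
    (g : ι → MvPolynomial (Fin k) ℂ) :
    diffOp p (∑ i ∈ s, c i • g i) = ∑ i ∈ s, c i • diffOp p (g i) := by
  simp only [diffOp, map_sum, map_smul, Finset.smul_sum]
  rw [Finset.sum_comm]
  exact Finset.sum_congr rfl fun i _ => Finset.sum_congr rfl fun μ _ => smul_comm _ _ _

lemma diffOp_pderiv_sum_linForm_pow {k m r : ℕ} {p : MvPolynomial (Fin k) ℂ}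
    (hp : p.IsHomogeneous m) (d : ℕ) (c : Fin r → ℂ) (v : Fin r → Fin k → ℂ) (a : Fin k) :
    diffOp p (pderiv a (∑ i, c i • linForm k (v i) ^ d)) =
      ∑ i, (c i * d * (d - 1).descFactorial m * (v i a * eval (v i) p)) •
        linForm k (v i) ^ (d - 1 - m) := by
  simp only [map_sum, Derivation.map_smul, pderiv_linForm_pow, smul_smul]
  rw [diffOp_sum_smul]
  refine Finset.sum_congr rfl fun i _ => ?_
  rw [diffOp_linForm_pow hp, smul_smul]
  congr 1
  ring

/-- The plane of vectors `w` with `Σ_j v_j w_j = 0`. -/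
noncomputable def dotKer (v : Fin 3 → ℂ) : Submodule ℂ (Fin 3 → ℂ) :=
  LinearMap.ker (dotProductBilin ℂ ℂ v)

lemma finrank_dotKer {v : Fin 3 → ℂ} (hv : v ≠ 0) : Module.finrank ℂ (dotKer v) = 2 := by
  have hne : (dotProductBilin ℂ ℂ v : Module.Dual ℂ (Fin 3 → ℂ)) ≠ 0 := fun h =>
    hv (dotProduct_eq_zero v fun w => LinearMap.congr_fun h w)
  have h := Module.Dual.finrank_ker_add_one_of_ne_zero hne
  rw [Module.finrank_fin_fun] at h
  exact Nat.succ_injective h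

/-- The linear map sending a family of vectors `w_i ⊥ v_i` to the triple `Σ_i ℓ_{v_i}^n w_i`. -/
noncomputable def powComb {r : ℕ} (v : Fin r → Fin 3 → ℂ) (n : ℕ) :
    (∀ i, dotKer (v i)) →ₗ[ℂ] (Fin 3 → MvPolynomial (Fin 3) ℂ) where
  toFun w j := ∑ i, (w i : Fin 3 → ℂ) j • linForm 3 (v i) ^ n
  map_add' w w' := by
    ext1 j
    simp [add_smul, Finset.sum_add_distrib]
  map_smul' a w := by
    ext1 j
    simp [mul_smul, Finset.smul_sum]

lemma koszulMap_mem_range_powComb {m r : ℕ} (d : ℕ) (c : Fin r → ℂ) (v : Fin r → Fin 3 → ℂ)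
    {p : Fin 3 → MvPolynomial (Fin 3) ℂ} (hp : ∀ j, (p j).IsHomogeneous m) :
    koszulMap (∑ i, c i • linForm 3 (v i) ^ d) p ∈ LinearMap.range (powComb v (d - 1 - m)) := by
  let q : Fin r → Fin 3 → ℂ := fun i j => eval (v i) (p j)
  refine ⟨fun i => ⟨(c i * d * (d - 1).descFactorial m) • crossProduct (q i) (v i), ?_⟩, ?_⟩
  · rw [dotKer, LinearMap.mem_ker, map_smul]
    exact (congrArg _ (dot_cross_self (q i) (v i))).trans (smul_zero _)
  · ext1 j
    fin_cases j <;>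
    · simp only [koszulMap, diffOp_pderiv_sum_linForm_pow (hp _)]
      simp [powComb, q, cross_apply, ← Finset.sum_sub_distrib, ← sub_smul]
      refine Finset.sum_congr rfl fun i _ => ?_
      congr 1
      ring

/-- Subadditivity bound for the Koszul flattening: if `f ∈ ℂ[x_0,x_1,x_2]` is homogeneous
of degree `d`, `1 ≤ m ≤ d − 2`, and `f = Σ_{i=1}^r c_i ℓ_{v_i}^d`, then
`rank P_f ≤ 2r`, where the rank of `P_f` is the dimension of the span of the images of
all triples of homogeneous degree-`m` polynomials. -/
theorem statement6 (d m r : ℕ) (hm : 1 ≤ m) (hmd : m + 2 ≤ d)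
    (f : MvPolynomial (Fin 3) ℂ) (hf : f.IsHomogeneous d)
    (c : Fin r → ℂ) (v : Fin r → Fin 3 → ℂ) (hv : ∀ i, v i ≠ 0)
    (hdecomp : f = ∑ i, c i • (linForm 3 (v i)) ^ d) :
    Module.rank ℂ ↥(Submodule.span ℂ
      {g : Fin 3 → MvPolynomial (Fin 3) ℂ |
        ∃ p : Fin 3 → MvPolynomial (Fin 3) ℂ,
          (∀ j, (p j).IsHomogeneous m) ∧ g = koszulMap f p})
      ≤ ((2 * r : ℕ) : Cardinal) := by
  have hle : Submodule.span ℂ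
      {g : Fin 3 → MvPolynomial (Fin 3) ℂ |
        ∃ p : Fin 3 → MvPolynomial (Fin 3) ℂ,
          (∀ j, (p j).IsHomogeneous m) ∧ g = koszulMap f p} ≤
      LinearMap.range (powComb v (d - 1 - m)) := by
    rw [Submodule.span_le]
    rintro _ ⟨p, hp, rfl⟩
    rw [hdecomp]
    exact koszulMap_mem_range_powComb d c v hp
  calc _ ≤ Module.rank ℂ (LinearMap.range (powComb v (d - 1 - m))) := Submodule.rank_mono hle
    _ ≤ Module.rank ℂ (∀ i, dotKer (v i)) := rank_range_le _
    _ = ((2 * r : ℕ) : Cardinal) := by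
      rw [← Module.finrank_eq_rank, Module.finrank_pi_fintype]
      simp [finrank_dotKer (hv _), mul_comm]
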